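/- Let f : {-1,1}^n → [-1,1] be symmetric of degree d with n > d². Then f(x) = p((x_1+⋯+x_n)/n) for a unique univariate polynomial p of degree at most d, and ‖p‖_∞ (the sup over [-1,1]) is at most n/(n − d²). -/

import Mathlib

open Finset

/-- The Fourier character χ_S evaluated at a point of the Boolean cube
(coordinates encoded by `Bool`, with `true ↦ 1` and `false ↦ -1`). -/
noncomputable def char {n : ℕ} (S : Finset (Fin n)) (x : Fin n → Bool) : ℝ :=
  ∏ i ∈ S, (if x i then (1 : ℝ) else -1)

/-- The multilinear polynomial with Fourier coefficients `c`, evaluated on the cube. -/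
noncomputable def eval' {n : ℕ} (c : Finset (Fin n) → ℝ) (x : Fin n → Bool) : ℝ :=
  ∑ S : Finset (Fin n), c S * char S x

/-- Flip the i-th coordinate. -/
def flipAt {n : ℕ} (x : Fin n → Bool) (i : Fin n) : Fin n → Bool :=
  Function.update x i (!(x i))

/-- Expectation over the uniform measure on the cube. -/
noncomputable def Ex {n : ℕ} (g : (Fin n → Bool) → ℝ) : ℝ :=
  (∑ x : Fin n → Bool, g x) / 2 ^ n

noncomputable def bval (b : Bool) : ℝ := if b then 1 else -1

section MarkovPart
open Polynomial Polynomial.Chebyshev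

noncomputable def chebRoots (d : ℕ) : Finset ℝ :=
  (Finset.range d).image (fun (k : ℕ) => Real.cos ((2 * k + 1) * Real.pi / (2 * d)))

lemma chebRoots_card (d : ℕ) : (chebRoots d).card = d := by
  have h := (Finset.range d).nodup_map_iff_injOn.mp (roots_T_real_nodup d)
  rw [chebRoots, Finset.card_image_of_injOn h, Finset.card_range]

lemma T_eq_nodal (d : ℕ) :
    T ℝ d = C ((2:ℝ) ^ (d - 1)) * Lagrange.nodal (chebRoots d) id := by
  have hr : (T ℝ d).roots = (chebRoots d).val := roots_T_real d
  have h := C_leadingCoeff_mul_prod_multiset_X_sub_C (p := T ℝ d) (by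
    rw [hr, natDegree_T]; simpa using chebRoots_card d)
  rw [hr, leadingCoeff_T] at h
  rw [← h]
  simp [Lagrange.nodal]

lemma T_deriv_le (d : ℕ) {x : ℝ} (hx : |x| ≤ 1) : |(derivative (T ℝ d)).eval x| ≤ (d:ℝ)^2 := by
  have h := abs_iterate_derivative_T_real_le d 1 hx
  simpa [derivative_T_eval_one] using h

lemma schur_outer (d : ℕ) (hd : 0 < d) (r : ℝ[X]) (hr : r.degree < d) (B : ℝ)
    (hB : ∀ φ : ℝ, |Real.sin φ * r.eval (Real.cos φ)| ≤ B) (x : ℝ) (hx : |x| ≤ 1)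
    (hxs : ∀ y ∈ chebRoots d, y ≤ x) : |r.eval x| ≤ d * B := by
  set s := chebRoots d with hs
  set a : ℝ := 2 ^ (d - 1) with ha
  have ha0 : 0 < a := by positivity
  have hd0 : (0:ℝ) < d := by exact_mod_cast hd
  have hB0 : 0 ≤ B := (abs_nonneg _).trans (hB 0)
  have hder : derivative (T ℝ d) = C a * ∑ i ∈ s, Lagrange.nodal (s.erase i) id := by
    rw [T_eq_nodal, derivative_C_mul, Lagrange.derivative_nodal]
  have hinj : Set.InjOn (id : ℝ → ℝ) s := Function.injective_id.injOn
  have hr' : r.degree < s.card := by rw [hs, chebRoots_card]; exact hr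
  have hint := Lagrange.eq_interpolate (v := id) hinj hr'
  rw [Lagrange.interpolate_eq_sum] at hint
  have key : ∀ i ∈ s, |r.eval i / ∏ j ∈ s.erase i, (i - j)| ≤ B * a / d := by
    intro i hi
    have hN : ∏ j ∈ s.erase i, (i - j) ≠ 0 := by
      rw [Finset.prod_ne_zero_iff]
      intro j hj
      exact sub_ne_zero.mpr (Finset.ne_of_mem_erase hj).symm
    have hTi : (derivative (T ℝ d)).eval i = a * ∏ j ∈ s.erase i, (i - j) := by
      rw [T_eq_nodal, derivative_C_mul, eval_mul, eval_C]
      have := Lagrange.eval_nodal_derivative_eval_node_eq (v := (id : ℝ → ℝ)) hi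
      simp only [id] at this
      rw [← hs, ← ha]
      congr 1
      rw [show (id : ℝ → ℝ) = fun x => x from rfl] at *
      rw [this, Lagrange.eval_nodal]
    have hT0 : (T ℝ d).eval i = 0 := by
      rw [T_eq_nodal, eval_mul, ← hs]
      have := Lagrange.eval_nodal_at_node (v := (id : ℝ → ℝ)) hi
      simp only [id] at this
      rw [show (id : ℝ → ℝ) = fun x => x from rfl] at *
      rw [this, mul_zero]
    obtain ⟨θ, rfl⟩ : ∃ θ, Real.cos θ = i := by
      rw [hs, chebRoots, Finset.mem_image] at hi
      obtain ⟨k, _, h⟩ := hi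
      exact ⟨_, h⟩
    rw [T_real_cos] at hT0
    have hU := U_real_cos θ (d - 1 : ℤ)
    have e1 : (derivative (T ℝ d)).eval (Real.cos θ) * Real.sin θ = d * Real.sin (d * θ) := by
      rw [T_derivative_eq_U, eval_mul, mul_assoc, hU]
      simp
    have e2 : |Real.sin (d * θ)| = 1 := by
      have := Real.sin_sq_add_cos_sq (d * θ)
      push_cast at hT0
      rw [hT0] at this
      have h2 : |Real.sin (d * θ)| ^ 2 = 1 := by rw [sq_abs]; linarith
      exact (pow_eq_one_iff_of_nonneg (abs_nonneg _) two_ne_zero).mp h2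
    rw [hTi] at e1
    have e3 : a * |∏ j ∈ s.erase (Real.cos θ), (Real.cos θ - j)| * |Real.sin θ| = d := by
      have := congrArg abs e1
      rw [abs_mul, abs_mul, abs_mul, e2, abs_of_pos ha0, abs_of_pos hd0, mul_one] at this
      exact this
    have e4 := hB θ
    rw [abs_mul] at e4
    rw [abs_div, div_le_div_iff₀ (abs_pos.mpr hN) hd0, ← e3]
    have h5 : 0 ≤ a * |∏ j ∈ s.erase (Real.cos θ), (Real.cos θ - j)| := by positivity
    nlinarith [mul_le_mul_of_nonneg_left e4 h5]
  have hP : ∀ i ∈ s, 0 ≤ ∏ j ∈ s.erase i, (x - j) := by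
    intro i hi
    exact Finset.prod_nonneg fun j hj => sub_nonneg.mpr (hxs j (Finset.mem_of_mem_erase hj))
  have hev : r.eval x = ∑ i ∈ s, (r.eval i / ∏ j ∈ s.erase i, (i - j)) * ∏ j ∈ s.erase i, (x - j) := by
    conv_lhs => rw [hint]
    simp [eval_finsetSum, eval_prod]
  have hTx : (derivative (T ℝ d)).eval x = a * ∑ i ∈ s, ∏ j ∈ s.erase i, (x - j) := by
    rw [hder]; simp [eval_finsetSum, Lagrange.eval_nodal]
  calc |r.eval x| ≤ ∑ i ∈ s, |(r.eval i / ∏ j ∈ s.erase i, (i - j)) * ∏ j ∈ s.erase i, (x - j)| := by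
        rw [hev]; exact Finset.abs_sum_le_sum_abs _ _
    _ ≤ ∑ i ∈ s, (B * a / d) * ∏ j ∈ s.erase i, (x - j) := by
        refine Finset.sum_le_sum fun i hi => ?_
        rw [abs_mul, abs_of_nonneg (hP i hi)]
        exact mul_le_mul_of_nonneg_right (key i hi) (hP i hi)
    _ = B / d * (derivative (T ℝ d)).eval x := by
        rw [hTx, ← Finset.mul_sum]; ring
    _ ≤ B / d * (d:ℝ)^2 := by
        gcongr
        exact (le_abs_self _).trans (T_deriv_le d hx)
    _ = d * B := by field_simp

lemma chebRoots_le (d : ℕ) (y : ℝ) (hy : y ∈ chebRoots d) :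
    y ≤ Real.cos (Real.pi / (2 * d)) := by
  rw [chebRoots, Finset.mem_image] at hy
  obtain ⟨k, hk, rfl⟩ := hy
  rw [Finset.mem_range] at hk
  have hd0 : (0:ℝ) < d := by exact_mod_cast (by omega : 0 < d)
  have hk' : (k:ℝ) + 1 ≤ d := by exact_mod_cast hk
  have hpi := Real.pi_pos
  apply Real.cos_le_cos_of_nonneg_of_le_pi
  · positivity
  · rw [div_le_iff₀ (by positivity)]; nlinarith
  · gcongr; nlinarith [(Nat.cast_nonneg k : (0:ℝ) ≤ k)]

lemma schur (d : ℕ) (hd : 0 < d) (r : ℝ[X]) (hr : r.degree < d) (B : ℝ)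
    (hB : ∀ φ : ℝ, |Real.sin φ * r.eval (Real.cos φ)| ≤ B) (x : ℝ) (hx : |x| ≤ 1) :
    |r.eval x| ≤ d * B := by
  have hd0 : (1:ℝ) ≤ d := by exact_mod_cast hd
  have hpi := Real.pi_pos
  by_cases h1 : Real.cos (Real.pi / (2 * d)) ≤ x
  · exact schur_outer d hd r hr B hB x hx fun y hy => (chebRoots_le d y hy).trans h1
  by_cases h2 : Real.cos (Real.pi / (2 * d)) ≤ -x
  · have := schur_outer d hd (r.comp (-X)) (by
      rcases eq_or_ne r 0 with rfl | h0
      · simp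
      · refine lt_of_le_of_lt degree_le_natDegree ?_
        rw [natDegree_comp]
        simp only [natDegree_neg, natDegree_X, mul_one]
        rwa [← degree_eq_natDegree h0]) B (fun φ => by
        have := hB (φ + Real.pi)
        simpa [Real.sin_add_pi, Real.cos_add_pi] using this) (-x) (by simpa using hx)
        fun y hy => (chebRoots_le d y hy).trans h2
    simpa using this
  push Not at h1 h2
  obtain ⟨l, u⟩ := abs_le.mp hx
  have hα0 : 0 ≤ Real.pi / (2 * d) := by positivity
  have hα1 : Real.pi / (2 * d) ≤ Real.pi / 2 := by
    gcongr; linarith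
  have hsin : 1 / d ≤ Real.sin (Real.pi / (2 * d)) := by
    refine le_trans (le_of_eq ?_) (Real.mul_le_sin hα0 hα1)
    field_simp
  have hcs := Real.sin_sq_add_cos_sq (Real.pi / (2 * d))
  have hx2 : x ^ 2 ≤ Real.cos (Real.pi / (2 * d)) ^ 2 := by
    apply sq_le_sq'  <;> linarith
  have hs : 1 / d ≤ Real.sin (Real.arccos x) := by
    rw [Real.sin_arccos]
    apply Real.le_sqrt_of_sq_le
    have : (1 / (d:ℝ)) ^ 2 ≤ Real.sin (Real.pi / (2 * d)) ^ 2 := by gcongr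
    linarith
  have h := hB (Real.arccos x)
  rw [Real.cos_arccos l u, abs_mul, abs_of_nonneg (le_trans (by positivity) hs)] at h
  have h3 : 1 / d * |r.eval x| ≤ B := le_trans (by gcongr) h
  have : |r.eval x| = d * (1 / d * |r.eval x|) := by field_simp
  rw [this]; gcongr

lemma decomp_pow (θ : ℝ) (k : ℕ) : ∃ a b : ℝ[X], a.degree < (k + 1 : ℕ) ∧ b.degree < k ∧
    ∀ φ, Real.cos (θ + φ) ^ k = a.eval (Real.cos φ) + Real.sin φ * b.eval (Real.cos φ) := by
  induction k with
  | zero => exact ⟨1, 0, by simp, by simp, by simp⟩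
  | succ k ih =>
    obtain ⟨a, b, ha, hb, h⟩ := ih
    rw [degree_lt_iff_coeff_zero] at ha hb
    refine ⟨C (Real.cos θ) * (X * a) - C (Real.sin θ) * (b - X * (X * b)),
      C (Real.cos θ) * (X * b) - C (Real.sin θ) * a, ?_, ?_, ?_⟩
    · rw [degree_lt_iff_coeff_zero]
      intro m hm
      obtain ⟨m, rfl⟩ : ∃ m', m = m' + 2 := ⟨m - 2, by omega⟩
      simp only [coeff_sub, coeff_C_mul, coeff_X_mul]
      rw [ha _ (by omega), hb _ (by omega), hb _ (by omega)]; simp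
    · rw [degree_lt_iff_coeff_zero]
      intro m hm
      obtain ⟨m, rfl⟩ : ∃ m', m = m' + 1 := ⟨m - 1, by omega⟩
      simp only [coeff_sub, coeff_C_mul, coeff_X_mul]
      rw [ha _ (by omega), hb _ (by omega)]; simp
    · intro φ
      rw [pow_succ, h, Real.cos_add]
      simp
      have := Real.sin_sq φ
      linear_combination (-Real.sin θ * b.eval (Real.cos φ)) * this

lemma decomp (θ : ℝ) (d : ℕ) (p : ℝ[X]) (hp : p.degree < (d + 1 : ℕ)) :
    ∃ a b : ℝ[X], b.degree < d ∧
    ∀ φ, p.eval (Real.cos (θ + φ)) = a.eval (Real.cos φ) + Real.sin φ * b.eval (Real.cos φ) := by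
  choose a b ha hb h using decomp_pow θ
  refine ⟨∑ k ∈ Finset.range (d + 1), C (p.coeff k) * a k,
    ∑ k ∈ Finset.range (d + 1), C (p.coeff k) * b k, ?_, ?_⟩
  · rw [← mem_degreeLT]
    refine Submodule.sum_mem _ fun k hk => ?_
    rw [← smul_eq_C_mul]
    refine Submodule.smul_mem _ _ ?_
    rw [mem_degreeLT]
    refine (hb k).trans_le ?_
    rw [Finset.mem_range] at hk
    exact_mod_cast (by omega : k ≤ d)
  · intro φ
    rw [eval_eq_sum_range' (n := d + 1)]
    · simp only [eval_finsetSum, eval_mul, eval_C, Finset.mul_sum, ← Finset.sum_add_distrib]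
      refine Finset.sum_congr rfl fun k _ => ?_
      rw [h k φ]; ring
    · rcases eq_or_ne p 0 with rfl | h0
      · simp
      · exact (natDegree_lt_iff_degree_lt h0).mpr hp

/-- Bernstein inequality. -/
lemma bernstein_ineq (d : ℕ) (hd : 0 < d) (p : ℝ[X]) (hp : p.natDegree ≤ d) (M : ℝ)
    (hM : ∀ x, |x| ≤ 1 → |p.eval x| ≤ M) (θ : ℝ) :
    |Real.sin θ * (derivative p).eval (Real.cos θ)| ≤ d * M := by
  have hp' : p.degree < (d + 1 : ℕ) :=
    lt_of_le_of_lt degree_le_natDegree (by exact_mod_cast (by omega : p.natDegree < d + 1))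
  obtain ⟨a, b, hb, h⟩ := decomp θ d p hp'
  have hB : ∀ φ : ℝ, |Real.sin φ * b.eval (Real.cos φ)| ≤ M := by
    intro φ
    have h1 := h φ
    have h2 := h (-φ)
    rw [Real.sin_neg, Real.cos_neg] at h2
    have m1 := hM _ (Real.abs_cos_le_one (θ + φ))
    have m2 := hM _ (Real.abs_cos_le_one (θ + -φ))
    rw [abs_le] at *
    constructor <;> linarith
  have h1 := schur d hd b hb M hB 1 (by simp)
  have d1 : HasDerivAt (fun φ => p.eval (Real.cos (θ + φ)))
      ((derivative p).eval (Real.cos θ) * (-Real.sin θ)) 0 := by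
    have e1 : HasDerivAt (fun φ => Real.cos (θ + φ)) (-Real.sin θ) 0 := by
      simpa using ((hasDerivAt_id (0:ℝ)).const_add θ).cos
    have e2 := p.hasDerivAt (Real.cos (θ + 0))
    have := HasDerivAt.comp (0:ℝ) e2 e1
    simpa [Function.comp_def] using this
  have d2 : HasDerivAt (fun φ => a.eval (Real.cos φ) + Real.sin φ * b.eval (Real.cos φ))
      (b.eval 1) 0 := by
    have c0 := Real.hasDerivAt_cos 0
    have s0 := Real.hasDerivAt_sin 0
    have := (HasDerivAt.comp (0:ℝ) (a.hasDerivAt (Real.cos 0)) c0).add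
      (s0.mul (HasDerivAt.comp (0:ℝ) (b.hasDerivAt (Real.cos 0)) c0))
    simp [Function.comp_def] at this
    exact this
  have e := d1.unique (by
    have : (fun φ => p.eval (Real.cos (θ + φ))) = _ := funext h
    rw [this]; exact d2)
  rw [← e] at h1
  rwa [mul_neg, abs_neg, mul_comm] at h1

/-- Markov brothers' inequality. -/
lemma markov (d : ℕ) (p : ℝ[X]) (hp : p.natDegree ≤ d) (M : ℝ)
    (hM : ∀ x, |x| ≤ 1 → |p.eval x| ≤ M) (x : ℝ) (hx : |x| ≤ 1) :
    |(derivative p).eval x| ≤ (d:ℝ)^2 * M := by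
  rcases Nat.eq_zero_or_pos d with rfl | hd
  · rw [derivative_of_natDegree_zero (by omega)]; simp
  · have hdeg : (derivative p).degree < d := by
      rcases eq_or_ne (derivative p) 0 with h0 | h0
      · rw [h0, degree_zero]; exact WithBot.bot_lt_coe _
      · rw [← natDegree_lt_iff_degree_lt h0]
        have := natDegree_derivative_le p
        omega
    have := schur d hd _ hdeg (d * M) (bernstein_ineq d hd p hp M hM) x hx
    linarith
end MarkovPart

section SymPart
open Polynomial

def cubePt {n : ℕ} (A : Finset (Fin n)) : Fin n → Bool := fun i => decide (i ∈ A)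

lemma sum_bval {n : ℕ} (x : Fin n → Bool) :
    ∑ i, bval (x i) = 2 * ((Finset.univ.filter (fun i => x i = true)).card : ℝ) - n := by
  have h : ∀ i, bval (x i) = 2 * (if x i = true then (1:ℝ) else 0) - 1 := by
    intro i; unfold bval; split_ifs <;> norm_num
  simp_rw [h, Finset.sum_sub_distrib, ← Finset.mul_sum, Finset.sum_boole]
  simp

lemma sum_bval_cubePt {n : ℕ} (A : Finset (Fin n)) :
    ∑ i, bval (cubePt A i) = 2 * (A.card : ℝ) - n := by
  rw [sum_bval]; simp [cubePt]

lemma char_alt_sum {n : ℕ} (S A : Finset (Fin n)) (hSA : S.card < A.card) :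
    ∑ B ∈ A.powerset, (-1 : ℝ) ^ B.card * char S (cubePt B) = 0 := by
  obtain ⟨i, hiA, hiS⟩ : ∃ i ∈ A, i ∉ S := by
    by_contra! h
    exact absurd (Finset.card_le_card h) (by omega)
  rw [← Finset.insert_erase hiA, Finset.sum_powerset_insert (Finset.notMem_erase i A),
    ← Finset.sum_add_distrib]
  refine Finset.sum_eq_zero fun B hB => ?_
  have hiB : i ∉ B := fun h => Finset.notMem_erase i A (Finset.mem_powerset.mp hB h)
  have : char S (cubePt (insert i B)) = char S (cubePt B) := by
    unfold char cubePt
    refine Finset.prod_congr rfl fun j hj => ?_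
    have : j ≠ i := fun h => hiS (h ▸ hj)
    simp [this]
  rw [this, Finset.card_insert_of_notMem hiB]
  ring

lemma exists_poly (n d : ℕ) (c : Finset (Fin n) → ℝ) (hdn : d < n)
    (hdeg : ∀ S, c S ≠ 0 → S.card ≤ d)
    (hsym : ∀ x y : Fin n → Bool,
      (∑ i, bval (x i)) = (∑ i, bval (y i)) → eval' c x = eval' c y) :
    ∃ p : ℝ[X], p.natDegree ≤ d ∧ ∀ x, eval' c x = p.eval ((∑ i, bval (x i)) / n) := by
  have hn0 : (0:ℝ) < n := by exact_mod_cast (by omega : 0 < n)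
  let A : ℕ → Finset (Fin n) := fun k => Finset.univ.filter (fun i => i.val < k)
  have hA : ∀ k ≤ n, (A k).card = k := by
    intro k hk
    simp only [A]
    rw [Fin.card_filter_val_lt]
    omega
  let g : ℕ → ℝ := fun k => eval' c (cubePt (A k))
  have hg : ∀ x, eval' c x = g ((Finset.univ.filter (fun i => x i = true)).card) := by
    intro x
    apply hsym
    rw [sum_bval, sum_bval_cubePt, hA]
    simpa using Finset.card_le_univ (Finset.univ.filter (fun i => x i = true))
  have hgB : ∀ B : Finset (Fin n), eval' c (cubePt B) = g B.card := by
    intro B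
    rw [hg]; simp [cubePt]
  have hΔ : ∀ m ≤ n, d < m → (fwdDiff 1)^[m] g 0 = 0 := by
    intro m hm hdm
    rw [fwdDiff_iter_eq_sum_shift]
    have h1 : ∑ B ∈ (A m).powerset, (-1 : ℝ) ^ B.card * g B.card = 0 := by
      simp_rw [← hgB, eval', Finset.mul_sum]
      rw [Finset.sum_comm]
      refine Finset.sum_eq_zero fun S _ => ?_
      by_cases hS : c S = 0
      · simp [hS]
      · have := char_alt_sum S (A m) (by rw [hA m hm]; exact lt_of_le_of_lt (hdeg S hS) hdm)
        rw [← mul_zero (c S), ← this, Finset.mul_sum]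
        refine Finset.sum_congr rfl fun B _ => by ring
    rw [Finset.sum_powerset_apply_card (fun k => (-1 : ℝ) ^ k * g k), hA m hm] at h1
    rw [← mul_zero ((-1 : ℝ) ^ m), ← h1, Finset.mul_sum]
    refine Finset.sum_congr rfl fun k hk => ?_
    rw [Finset.mem_range] at hk
    obtain ⟨j, rfl⟩ : ∃ j, m = k + j := ⟨m - k, by omega⟩
    have : ((-1:ℝ) ^ k) * (-1) ^ k = 1 := by rw [← mul_pow]; simp
    simp only [zsmul_eq_mul, nsmul_eq_mul, Nat.add_sub_cancel_left, pow_add]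
    push_cast
    simp only [smul_eq_mul, mul_one, zero_add]
    linear_combination (-(-1:ℝ) ^ j * ((k + j).choose k) * g k) * this
  let P : ℝ[X] := ∑ m ∈ Finset.range (d + 1),
    Polynomial.C ((fwdDiff 1)^[m] g 0 / m.factorial) * descPochhammer ℝ m
  have hPdeg : P.natDegree ≤ d := by
    refine natDegree_sum_le_of_forall_le _ _ fun m hm => ?_
    refine (natDegree_C_mul_le _ _).trans ?_
    rw [descPochhammer_natDegree]
    rw [Finset.mem_range] at hm; omega
  have hPe : ∀ k ≤ n, P.eval (k:ℝ) = g k := by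
    intro k hk
    have h := shift_eq_sum_fwdDiff_iter 1 g k 0
    simp only [smul_eq_mul, mul_one, zero_add] at h
    have h2 : ∀ N, k ≤ N → ∑ m ∈ Finset.range (k + 1), k.choose m • (fwdDiff 1)^[m] g 0
        = ∑ m ∈ Finset.range (N + 1), k.choose m • (fwdDiff 1)^[m] g 0 := by
      intro N hN
      refine Finset.sum_subset (Finset.range_subset_range.mpr (by omega)) fun m _ hm => ?_
      rw [Finset.mem_range] at hm
      rw [Nat.choose_eq_zero_of_lt (by omega), zero_smul]
    have h3 : ∑ m ∈ Finset.range (d + 1), k.choose m • (fwdDiff 1)^[m] g 0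
        = ∑ m ∈ Finset.range (n + 1), k.choose m • (fwdDiff 1)^[m] g 0 := by
      refine Finset.sum_subset (Finset.range_subset_range.mpr (by omega)) fun m hm1 hm => ?_
      rw [Finset.mem_range] at hm hm1
      rw [hΔ m (by omega) (by omega), smul_zero]
    rw [h, h2 n hk, ← h3]
    simp only [P, eval_finsetSum, eval_mul, eval_C, descPochhammer_eval_eq_descFactorial]
    refine Finset.sum_congr rfl fun m _ => ?_
    rw [Nat.descFactorial_eq_factorial_mul_choose, nsmul_eq_mul]
    have : (m.factorial : ℝ) ≠ 0 := by exact_mod_cast m.factorial_ne_zero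
    push_cast
    field_simp
  refine ⟨P.comp (Polynomial.C ((n:ℝ) / 2) * (X + 1)), ?_, ?_⟩
  · refine natDegree_comp_le.trans ?_
    have : (Polynomial.C ((n:ℝ) / 2) * (X + 1)).natDegree ≤ 1 := by
      refine (natDegree_C_mul_le _ _).trans ?_
      exact (natDegree_X_add_C (1:ℝ)).le
    calc _ ≤ d * 1 := Nat.mul_le_mul hPdeg this
      _ = d := mul_one d
  · intro x
    rw [hg, ← hPe _ (by simpa using Finset.card_le_univ (Finset.univ.filter (fun i => x i = true))),
      sum_bval, eval_comp]
    congr 1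
    simp only [eval_mul, eval_C, eval_add, eval_X, eval_one]
    field_simp
    ring

lemma exists_cube (n k : ℕ) (hk : k ≤ n) :
    ∃ x : Fin n → Bool, ∑ i, bval (x i) = 2 * (k:ℝ) - n := by
  obtain ⟨A, _, hA⟩ := Finset.exists_subset_card_eq (s := (Finset.univ : Finset (Fin n)))
    (n := k) (by simpa using hk)
  exact ⟨cubePt A, by rw [sum_bval_cubePt, hA]⟩

lemma poly_sup_bound (n d : ℕ) (p : ℝ[X]) (hp : p.natDegree ≤ d) (hn : (d : ℝ) ^ 2 < n)
    (hb : ∀ k ≤ n, |p.eval ((2 * (k:ℝ) - n) / n)| ≤ 1) (y : ℝ) (hy : |y| ≤ 1) :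
    |p.eval y| ≤ (n : ℝ) / ((n : ℝ) - (d : ℝ) ^ 2) := by
  have hn0 : (0:ℝ) < n := lt_of_le_of_lt (by positivity) hn
  obtain ⟨y0, hy0, hmax⟩ := (isCompact_Icc (a := (-1:ℝ)) (b := 1)).exists_isMaxOn
    ⟨0, by simp⟩ (f := fun x => |p.eval x|) (by fun_prop)
  set M := |p.eval y0| with hMdef
  have hM : ∀ x, |x| ≤ 1 → |p.eval x| ≤ M := fun x hx => hmax (abs_le.mp hx)
  have hmk := markov d p hp M hM
  obtain ⟨k, hk, hkd⟩ : ∃ k : ℕ, k ≤ n ∧ |(2 * (k:ℝ) - n) / n - y0| ≤ 1 / n := by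
    obtain ⟨l, u⟩ := hy0
    set t := n * (y0 + 1) / 2 with ht
    have ht0 : 0 ≤ t := by
      have : 0 ≤ y0 + 1 := by linarith
      positivity
    have htn : t ≤ n := by rw [ht]; nlinarith
    refine ⟨⌊t + 1/2⌋₊, ?_, ?_⟩
    · have : ⌊t + 1/2⌋₊ < n + 1 := by
        rw [Nat.floor_lt (by positivity)]; push_cast; linarith
      omega
    · have f1 := Nat.floor_le (a := t + 1/2) (by positivity)
      have f2 := Nat.lt_floor_add_one (t + 1/2)
      have hy : y0 = (2 * t - n) / n := by rw [ht]; field_simp; ring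
      rw [hy, ← sub_div, abs_div, abs_of_pos hn0]
      gcongr
      rw [abs_le]
      constructor <;> linarith
  set z := (2 * (k:ℝ) - n) / n with hz
  have hkR : (k:ℝ) ≤ n := by exact_mod_cast hk
  have hzI : z ∈ Set.Icc (-1:ℝ) 1 := by
    constructor
    · rw [hz, le_div_iff₀ hn0]; have : (0:ℝ) ≤ k := by positivity
      linarith
    · rw [hz, div_le_iff₀ hn0]; linarith
  have hmvt := (convex_Icc (-1:ℝ) 1).norm_image_sub_le_of_norm_hasDerivWithin_le
    (f := fun x => p.eval x) (f' := fun x => (derivative p).eval x) (C := (d:ℝ)^2 * M)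
    (fun x _ => (p.hasDerivAt x).hasDerivWithinAt)
    (fun x hx => hmk x (abs_le.mpr hx)) hzI hy0
  rw [Real.norm_eq_abs, Real.norm_eq_abs, abs_sub_comm y0 z] at hmvt
  have hM0 : 0 ≤ M := abs_nonneg _
  have h1 : M ≤ 1 + (d:ℝ)^2 * M * (1 / n) := by
    calc M = |p.eval z + (p.eval y0 - p.eval z)| := by rw [hMdef]; congr 1; ring
      _ ≤ |p.eval z| + |p.eval y0 - p.eval z| := abs_add_le _ _
      _ ≤ 1 + (d:ℝ)^2 * M * |z - y0| := add_le_add (hb k hk) hmvt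
      _ ≤ _ := by gcongr
  refine (hM y hy).trans ?_
  rw [le_div_iff₀ (by linarith)]
  have h2 : M * n ≤ (1 + (d:ℝ)^2 * M * (1 / n)) * n := by gcongr
  have h3 : (1 + (d:ℝ)^2 * M * (1 / n)) * n = n + (d:ℝ)^2 * M := by field_simp
  linarith
end SymPart

theorem symmetric_polynomial_bound (n d : ℕ) (c : Finset (Fin n) → ℝ)
    (hdeg : ∀ S, c S ≠ 0 → S.card ≤ d)
    (hbd : ∀ x, |eval' c x| ≤ 1)
    (hsym : ∀ x y : Fin n → Bool,
      (∑ i, bval (x i)) = (∑ i, bval (y i)) → eval' c x = eval' c y)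
    (hn : (d : ℝ) ^ 2 < n) :
    ∃ p : Polynomial ℝ,
      (p.natDegree ≤ d ∧ ∀ x, eval' c x = p.eval ((∑ i, bval (x i)) / n)) ∧
      (∀ q : Polynomial ℝ,
        (q.natDegree ≤ d ∧ ∀ x, eval' c x = q.eval ((∑ i, bval (x i)) / n)) → q = p) ∧
      (∀ y : ℝ, |y| ≤ 1 → |p.eval y| ≤ (n : ℝ) / ((n : ℝ) - (d : ℝ) ^ 2)) := by
  have hdn : d < n := by
    have h1 : d ^ 2 < n := by exact_mod_cast hn
    have h2 : d ≤ d ^ 2 := Nat.le_self_pow two_ne_zero d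
    omega
  have hn0 : (n:ℝ) ≠ 0 := by
    have : n ≠ 0 := by omega
    exact_mod_cast this
  obtain ⟨p, hp, hpe⟩ := exists_poly n d c hdn hdeg hsym
  refine ⟨p, ⟨hp, hpe⟩, ?_, ?_⟩
  · rintro q ⟨hq, hqe⟩
    have hdl : ∀ r : Polynomial ℝ, r.natDegree ≤ d →
        r.degree < (Finset.range (n + 1)).card := by
      intro r hr
      refine lt_of_le_of_lt Polynomial.degree_le_natDegree ?_
      rw [Finset.card_range]
      exact_mod_cast (by omega : r.natDegree < n + 1)
    refine Polynomial.eq_of_degrees_lt_of_eval_index_eq (Finset.range (n + 1))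
      (v := fun k : ℕ => (2 * (k:ℝ) - n) / n) ?_ (hdl q hq) (hdl p hp) ?_
    · intro a _ b _ hab
      have h : (2 * (a:ℝ) - n) / n = (2 * (b:ℝ) - n) / n := hab
      rw [div_left_inj' hn0] at h
      have : (a:ℝ) = b := by linarith
      exact_mod_cast this
    · intro k hk
      obtain ⟨x, hx⟩ := exists_cube n k (by rw [Finset.mem_range] at hk; omega)
      rw [← hx, ← hqe, ← hpe]
  · refine poly_sup_bound n d p hp hn ?_
    intro k hk
    obtain ⟨x, hx⟩ := exists_cube n k hk
    rw [← hx, ← hpe]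
    exact hbd x
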